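/- Let n = 2^k be a power of 2, let H ⊆ {0,1}^n be the subgroup of Hadamard codewords, and for a ∈ {0,1}^n let v^a ∈ ℝ^n be the unit vector with coordinates v^a_i = (−1)^{a_i}/√n. Then: (a) for every coset x of H and every z ∈ {0,1}^n, Σ_{a ∈ x} Σ_{b ∈ x⊕z} ⟨v^a, v^b⟩²/n = 1 (so the numbers ⟨v^a,v^b⟩²/n form a probability distribution on x × (x⊕z)); (b) for every coset x of H and every z ∈ {0,1}^n, Σ_{a ∈ x} ⟨v^a, v^{a⊕z}⟩²/n = (1 − 2|z|/n)², where |z| is the Hamming weight of z; and (c) for every η ∈ [0,1/2], if z ∈ {0,1}^n is η-biased (each bit independently 1 with probability η), then E_z[(1 − 2|z|/n)²] ≥ (1 − 2η)². Consequently, the quantum strategy for the Khot–Vishnoi game KV(n,η) that measures the n-dimensional maximally entangled state in the coset bases {v^a : a ∈ x} and {v^b : b ∈ y} wins with probability at least (1 − 2η)². -/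

import Mathlib

open scoped Classical
open Finset

/-- Inner product mod 2 on `{0,1}^k`, as a Boolean. -/
def bdot {k : ℕ} (a b : Fin k → Bool) : Bool :=
  decide ((Finset.univ.filter fun t => a t && b t).card % 2 = 1)

/-- The Hadamard codeword associated with `s ∈ {0,1}^k`. -/
def had {k : ℕ} (s : Fin k → Bool) : (Fin k → Bool) → Bool := fun j => bdot s j

/-- Bitwise XOR of two strings in `{0,1}^n`, `n = 2^k`. -/
def sxor {k : ℕ} (w w' : (Fin k → Bool) → Bool) : (Fin k → Bool) → Bool :=
  fun j => xor (w j) (w' j)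

/-- Hamming weight of a string in `{0,1}^n`, `n = 2^k`. -/
def wt {k : ℕ} (z : (Fin k → Bool) → Bool) : ℕ :=
  (Finset.univ.filter fun j => z j = true).card

/-- The unit vector `v^a ∈ ℝ^n` (`n = 2^k`) with `v^a_i = (−1)^{a_i}/√n`. -/
noncomputable def kvVec {k : ℕ} (a : (Fin k → Bool) → Bool) : (Fin k → Bool) → ℝ :=
  fun i => (if a i then (-1 : ℝ) else 1) / Real.sqrt (2 ^ k)

/-- The Euclidean dot product on `ℝ^n`, coordinates indexed by `{0,1}^k`. -/
def dotR {k : ℕ} (u v : (Fin k → Bool) → ℝ) : ℝ := ∑ t, u t * v t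

noncomputable def kvSgn (b : Bool) : ℝ := if b then -1 else 1

lemma kvSgn_xor (a b : Bool) : kvSgn (xor a b) = kvSgn a * kvSgn b := by
  cases a <;> cases b <;> simp [kvSgn]

lemma kvSgn_sq (a : Bool) : kvSgn a * kvSgn a = 1 := by
  cases a <;> simp [kvSgn]

lemma kv_sum_prod {ι : Type*} [Fintype ι] [DecidableEq ι] (g : ι → Bool → ℝ) :
    ∑ z : ι → Bool, ∏ j, g j (z j) = ∏ j, (g j true + g j false) := by
  have h := Finset.prod_univ_sum (fun _ : ι => (Finset.univ : Finset Bool)) g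
  rw [Fintype.piFinset_univ] at h
  simp only [Fintype.sum_bool] at h
  convert h.symm

lemma kvSgn_had {k : ℕ} (s j : Fin k → Bool) :
    kvSgn (had s j) = ∏ t, kvSgn (s t && j t) := by
  unfold kvSgn had bdot
  rw [Finset.prod_ite]
  simp only [Finset.prod_const, one_pow, mul_one]
  rcases Nat.mod_two_eq_zero_or_one (Finset.univ.filter fun t => (s t && j t) = true).card with h | h
  · rw [Even.neg_one_pow (Nat.even_iff.2 h)]
    rw [h]
    simp
  · rw [Odd.neg_one_pow (Nat.odd_iff.2 h)]
    rw [h]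
    simp

lemma kv_orth {k : ℕ} (i j : Fin k → Bool) :
    ∑ s : Fin k → Bool, kvSgn (had s i) * kvSgn (had s j) = if i = j then (2 : ℝ) ^ k else 0 := by
  simp only [kvSgn_had, ← Finset.prod_mul_distrib]
  rw [kv_sum_prod (fun t b => kvSgn (b && i t) * kvSgn (b && j t))]
  split_ifs with h
  · subst h
    simp only [kvSgn_sq]
    norm_num
  · obtain ⟨t, ht⟩ := Function.ne_iff.1 h
    apply Finset.prod_eq_zero (Finset.mem_univ t)
    revert ht
    cases i t <;> cases j t <;> simp [kvSgn]

lemma kv_parseval {k : ℕ} (f : (Fin k → Bool) → ℝ) :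
    ∑ s : Fin k → Bool, (∑ j, kvSgn (had s j) * f j) ^ 2 = 2 ^ k * ∑ j, f j ^ 2 := by
  have h1 : ∀ s : Fin k → Bool, (∑ j, kvSgn (had s j) * f j) ^ 2
      = ∑ i, ∑ j, (f i * f j) * (kvSgn (had s i) * kvSgn (had s j)) := by
    intro s
    rw [sq, Finset.sum_mul_sum]
    refine Finset.sum_congr rfl fun i _ => Finset.sum_congr rfl fun j _ => ?_
    ring
  simp only [h1]
  rw [Finset.sum_comm, Finset.mul_sum]
  refine Finset.sum_congr rfl fun i _ => ?_
  rw [Finset.sum_comm]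
  simp only [← Finset.mul_sum, kv_orth]
  simp
  ring

lemma kv_dot {k : ℕ} (a b : (Fin k → Bool) → Bool) :
    dotR (kvVec a) (kvVec b) = (∑ j, kvSgn (a j) * kvSgn (b j)) / 2 ^ k := by
  unfold dotR kvVec
  rw [Finset.sum_div]
  refine Finset.sum_congr rfl fun j _ => ?_
  change kvSgn (a j) / _ * (kvSgn (b j) / _) = _
  rw [div_mul_div_comm, Real.mul_self_sqrt (by positivity)]

lemma kv_sum_sgn {k : ℕ} (z : (Fin k → Bool) → Bool) :
    ∑ j, kvSgn (z j) = 2 ^ k - 2 * (wt z : ℝ) := by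
  have h : ∀ j, kvSgn (z j) = 1 - 2 * (if z j = true then (1 : ℝ) else 0) := by
    intro j
    cases z j <;> norm_num [kvSgn]
  simp only [h, Finset.sum_sub_distrib, ← Finset.mul_sum]
  simp [wt]

lemma kv_dot_z {k : ℕ} (a b z : (Fin k → Bool) → Bool) (h : ∀ j, b j = xor (a j) (z j)) :
    dotR (kvVec a) (kvVec b) = 1 - 2 * (wt z : ℝ) / 2 ^ k := by
  rw [kv_dot]
  simp only [h, kvSgn_xor, ← mul_assoc, kvSgn_sq, one_mul]
  rw [kv_sum_sgn, sub_div, div_self (by positivity)]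

lemma kv_part_b {k : ℕ} (z : (Fin k → Bool) → Bool) (a b : (Fin k → Bool) → (Fin k → Bool) → Bool)
    (h : ∀ s j, b s j = xor (a s j) (z j)) :
    ∑ s, dotR (kvVec (a s)) (kvVec (b s)) ^ 2 / (2 : ℝ) ^ k
      = (1 - 2 * (wt z : ℝ) / (2 : ℝ) ^ k) ^ 2 := by
  simp only [fun s => kv_dot_z (a s) (b s) z (h s)]
  simp
  field_simp

lemma kv_weight {k : ℕ} (η : ℝ) (z : (Fin k → Bool) → Bool) :
    η ^ (wt z) * (1 - η) ^ (2 ^ k - wt z) = ∏ j, (if z j then η else 1 - η) := by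
  rw [Finset.prod_ite, Finset.prod_const, Finset.prod_const]
  have h := Finset.card_filter_add_card_filter_not (s := (Finset.univ : Finset (Fin k → Bool)))
    (fun j => z j = true)
  have h2 : (Finset.univ : Finset (Fin k → Bool)).card = 2 ^ k := by simp
  rw [h2] at h
  have : 2 ^ k - wt z = (Finset.univ.filter fun j => ¬ z j = true).card := by
    unfold wt
    omega
  rw [this]
  rfl

lemma kv_total {k : ℕ} (η : ℝ) :
    ∑ z : (Fin k → Bool) → Bool, η ^ (wt z) * (1 - η) ^ (2 ^ k - wt z) = 1 := by
  simp only [kv_weight]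
  rw [kv_sum_prod (fun _ b => if b then η else 1 - η)]
  simp

lemma kv_mean_one {k : ℕ} (η : ℝ) (i : Fin k → Bool) :
    ∑ z : (Fin k → Bool) → Bool, η ^ (wt z) * (1 - η) ^ (2 ^ k - wt z) * kvSgn (z i)
      = 1 - 2 * η := by
  have h : ∀ z : (Fin k → Bool) → Bool, η ^ (wt z) * (1 - η) ^ (2 ^ k - wt z) * kvSgn (z i)
      = ∏ j, ((if z j then η else 1 - η) * (if j = i then kvSgn (z j) else 1)) := by
    intro z
    rw [kv_weight, Finset.prod_mul_distrib]
    simp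
  simp only [h]
  rw [kv_sum_prod (fun j b => (if b then η else 1 - η) * (if j = i then kvSgn b else 1))]
  rw [Finset.prod_eq_single i]
  · simp [kvSgn]
    ring
  · intro j _ hj
    simp [hj]
  · simp

lemma kv_mean {k : ℕ} (η : ℝ) :
    ∑ z : (Fin k → Bool) → Bool, η ^ (wt z) * (1 - η) ^ (2 ^ k - wt z)
      * (1 - 2 * (wt z : ℝ) / (2 : ℝ) ^ k) = 1 - 2 * η := by
  have h : ∀ z : (Fin k → Bool) → Bool, η ^ (wt z) * (1 - η) ^ (2 ^ k - wt z)
      * (1 - 2 * (wt z : ℝ) / (2 : ℝ) ^ k)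
      = ∑ i, η ^ (wt z) * (1 - η) ^ (2 ^ k - wt z) * kvSgn (z i) / 2 ^ k := by
    intro z
    rw [← Finset.sum_div, ← Finset.mul_sum, kv_sum_sgn]
    field_simp
  simp only [h]
  rw [Finset.sum_comm]
  simp only [← Finset.sum_div, kv_mean_one]
  simp
  field_simp

lemma kv_part_c {k : ℕ} (η : ℝ) (h0 : 0 ≤ η) (h1 : η ≤ 1 / 2) :
    (1 - 2 * η) ^ 2 ≤
      ∑ z : (Fin k → Bool) → Bool,
        η ^ (wt z) * (1 - η) ^ (2 ^ k - wt z) * (1 - 2 * (wt z : ℝ) / (2 : ℝ) ^ k) ^ 2 := by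
  have hpos : 0 ≤ ∑ z : (Fin k → Bool) → Bool, η ^ (wt z) * (1 - η) ^ (2 ^ k - wt z)
      * ((1 - 2 * (wt z : ℝ) / (2 : ℝ) ^ k) - (1 - 2 * η)) ^ 2 := by
    refine Finset.sum_nonneg fun z _ => ?_
    have : 0 ≤ 1 - η := by linarith
    positivity
  have hexp : ∀ z : (Fin k → Bool) → Bool, η ^ (wt z) * (1 - η) ^ (2 ^ k - wt z)
      * ((1 - 2 * (wt z : ℝ) / (2 : ℝ) ^ k) - (1 - 2 * η)) ^ 2
      = η ^ (wt z) * (1 - η) ^ (2 ^ k - wt z) * (1 - 2 * (wt z : ℝ) / (2 : ℝ) ^ k) ^ 2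
        - 2 * (1 - 2 * η) * (η ^ (wt z) * (1 - η) ^ (2 ^ k - wt z)
          * (1 - 2 * (wt z : ℝ) / (2 : ℝ) ^ k))
        + (1 - 2 * η) ^ 2 * (η ^ (wt z) * (1 - η) ^ (2 ^ k - wt z)) := by
    intro z
    ring
  simp only [hexp] at hpos
  rw [Finset.sum_add_distrib, Finset.sum_sub_distrib, ← Finset.mul_sum, ← Finset.mul_sum,
    kv_mean, kv_total] at hpos
  linarith

/-- With `n = 2^k`, `H` the Hadamard subgroup and `v^a` as above
(cosets `x = u⊕H` and `y = x⊕z` enumerated as `u⊕h_s` and `u⊕z⊕h_t`):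
(a) the numbers `⟨v^a,v^b⟩²/n`, for `a ∈ x`, `b ∈ x⊕z`, sum to `1` (they form a
probability distribution, namely the quantum strategy's output distribution);
(b) `Σ_{a∈x} ⟨v^a, v^{a⊕z}⟩²/n = (1 − 2|z|/n)²`;
(c) for `η ∈ [0,1/2]` and `η`-biased `z`, `E_z[(1 − 2|z|/n)²] ≥ (1 − 2η)²`;
and consequently (d) the quantum strategy measuring the `n`-dimensional maximally
entangled state in the coset bases wins the Khot–Vishnoi game with probability at
least `(1 − 2η)²`. -/
theorem khot_vishnoi_quantum_strategy (k : ℕ) :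
    (∀ u z : (Fin k → Bool) → Bool,
        (∑ s : Fin k → Bool, ∑ t : Fin k → Bool,
            dotR (kvVec (sxor u (had s))) (kvVec (sxor (sxor u z) (had t))) ^ 2
              / (2 : ℝ) ^ k) = 1) ∧
    (∀ u z : (Fin k → Bool) → Bool,
        (∑ s : Fin k → Bool,
            dotR (kvVec (sxor u (had s))) (kvVec (sxor (sxor u (had s)) z)) ^ 2
              / (2 : ℝ) ^ k)
          = (1 - 2 * (wt z : ℝ) / (2 : ℝ) ^ k) ^ 2) ∧
    (∀ η : ℝ, 0 ≤ η → η ≤ 1 / 2 →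
        (1 - 2 * η) ^ 2 ≤
          ∑ z : (Fin k → Bool) → Bool,
            η ^ (wt z) * (1 - η) ^ (2 ^ k - wt z)
              * (1 - 2 * (wt z : ℝ) / (2 : ℝ) ^ k) ^ 2) ∧
    (∀ η : ℝ, 0 ≤ η → η ≤ 1 / 2 →
        (1 - 2 * η) ^ 2 ≤
          (∑ u : (Fin k → Bool) → Bool, ∑ z : (Fin k → Bool) → Bool,
              η ^ (wt z) * (1 - η) ^ (2 ^ k - wt z) *
                (∑ s : Fin k → Bool,
                  dotR (kvVec (sxor u (had s))) (kvVec (sxor (sxor u z) (had s))) ^ 2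
                    / (2 : ℝ) ^ k))
            / (2 : ℝ) ^ (2 ^ k)) := by
  refine ⟨?_, ?_, ?_, ?_⟩
  · intro u z
    rw [Finset.sum_comm]
    have key : ∀ t : Fin k → Bool, ∑ s : Fin k → Bool,
        dotR (kvVec (sxor u (had s))) (kvVec (sxor (sxor u z) (had t))) ^ 2 / (2 : ℝ) ^ k
          = 1 / 2 ^ k := by
      intro t
      have h : ∀ s : Fin k → Bool,
          dotR (kvVec (sxor u (had s))) (kvVec (sxor (sxor u z) (had t)))
            = (∑ j, kvSgn (had s j) * kvSgn (xor (z j) (had t j))) / 2 ^ k := by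
        intro s
        rw [kv_dot]
        congr 1
        refine Finset.sum_congr rfl fun j _ => ?_
        simp only [sxor, kvSgn_xor]
        linear_combination (kvSgn (had s j) * kvSgn (z j) * kvSgn (had t j)) * kvSgn_sq (u j)
      simp only [h, div_pow]
      rw [← Finset.sum_div, ← Finset.sum_div, kv_parseval]
      simp only [sq (kvSgn _), kvSgn_sq]
      simp
      field_simp
    simp only [key]
    simp
  · intro u z
    exact kv_part_b z (fun s => sxor u (had s)) (fun s => sxor (sxor u (had s)) z)
      (fun s j => rfl)
  · intro η h0 h1
    exact kv_part_c η h0 h1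
  · intro η h0 h1
    have h : ∀ u z : (Fin k → Bool) → Bool, ∑ s : Fin k → Bool,
        dotR (kvVec (sxor u (had s))) (kvVec (sxor (sxor u z) (had s))) ^ 2 / (2 : ℝ) ^ k
          = (1 - 2 * (wt z : ℝ) / (2 : ℝ) ^ k) ^ 2 := fun u z =>
      kv_part_b z (fun s => sxor u (had s)) (fun s => sxor (sxor u z) (had s))
        (fun s j => by simp only [sxor]; cases u j <;> cases z j <;> cases had s j <;> rfl)
    simp only [h]
    rw [Finset.sum_const, nsmul_eq_mul]
    have hc : ((Finset.univ : Finset ((Fin k → Bool) → Bool)).card : ℝ) = 2 ^ (2 ^ k) := by simp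
    rw [hc, mul_div_cancel_left₀ _ (by positivity)]
    exact kv_part_c η h0 h1
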